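/- arXiv:2105.05413 — 9 statements merged into one kernel-verified Lean document; each statement's English description precedes it below -/
import Mathlib

section
/- Let u⁰,u¹,…,uⁿ ∈ V be an implicit Euler Galerkin solution in V for the form a, time step Δt > 0 and data f¹,…,fⁿ. Then for every j = 1,…,n one has ‖u^j‖ + √(κ_min/Q)·Δt·p(u^j) ≤ ‖u^{j−1}‖ + Δt·‖f^j‖. -/
open RealInnerProductSpace Finset

/-- One-step stability estimate for the implicit Euler Galerkin scheme:
`‖u^j‖ + √(κ_min/Q)·Δt·p(u^j) ≤ ‖u^{j−1}‖ + Δt·‖f^j‖` for `j = 1,…,n`. -/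
theorem implicit_euler_one_step_stability
    {E : Type*} [NormedAddCommGroup E] [InnerProductSpace ℝ E]
    (a : E →ₗ[ℝ] E →ₗ[ℝ] ℝ)
    (hsymm : ∀ u v : E, a u v = a v u)
    (hpsd : ∀ v : E, 0 ≤ a v v)
    (Q : ℝ) (hQ : 0 < Q)
    (hpoin : ∀ v : E, ‖v‖ ^ 2 ≤ Q * a v v)
    (p : Seminorm ℝ E)
    (κmin : ℝ) (hκ : 0 < κmin)
    (hκp : ∀ v : E, κmin * (p v) ^ 2 ≤ a v v)
    (V : Submodule ℝ E)
    (n : ℕ) (u f : ℕ → E) (Δt : ℝ) (hΔt : 0 < Δt)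
    (humem : ∀ j ≤ n, u j ∈ V)
    (hscheme : ∀ j, 1 ≤ j → j ≤ n → ∀ v ∈ V,
      ⟪u j - u (j - 1), v⟫ + Δt * a (u j) v = Δt * ⟪f j, v⟫) :
    ∀ j, 1 ≤ j → j ≤ n →
      ‖u j‖ + Real.sqrt (κmin / Q) * Δt * p (u j) ≤ ‖u (j - 1)‖ + Δt * ‖f j‖ := by
  intro j hj hjn
  have h := hscheme j hj hjn (u j) (humem j hjn)
  rw [inner_sub_left, real_inner_self_eq_norm_sq] at h
  have h1 := real_inner_le_norm (u (j - 1)) (u j)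
  have h2 := mul_le_mul_of_nonneg_left (real_inner_le_norm (f j) (u j)) hΔt.le
  by_cases h0 : u j = 0
  · rw [h0, map_zero, norm_zero]
    have := mul_nonneg hΔt.le (norm_nonneg (f j))
    have := norm_nonneg (u (j - 1))
    linarith
  have hN : 0 < ‖u j‖ := norm_pos_iff.mpr h0
  have hA : Real.sqrt (κmin / Q) * p (u j) * ‖u j‖ ≤ a (u j) (u j) := by
    refine (pow_le_pow_iff_left₀ (by positivity) (hpsd (u j)) two_ne_zero).mp ?_
    rw [mul_pow, mul_pow, Real.sq_sqrt (by positivity)]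
    have h3 := mul_le_mul (hκp (u j)) (hpoin (u j)) (by positivity) (hpsd (u j))
    have h4 : κmin / Q * p (u j) ^ 2 * ‖u j‖ ^ 2
        = (κmin * p (u j) ^ 2 * ‖u j‖ ^ 2) / Q := by ring
    rw [h4, div_le_iff₀ hQ]
    linarith
  have h5 := mul_le_mul_of_nonneg_left hA hΔt.le
  refine le_of_mul_le_mul_right ?_ hN
  linarith
end

section
/- (Stability of the implicit Euler Galerkin scheme.) Let u⁰,u¹,…,uⁿ ∈ V be an implicit Euler Galerkin solution in V for the form a, time step Δt > 0 and data f¹,…,fⁿ. Then ‖uⁿ‖ + √(κ_min/Q)·Δt·Σ_{j=1}^{n} p(u^j) ≤ ‖u⁰‖ + Δt·Σ_{j=1}^{n} ‖f^j‖. -/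
open RealInnerProductSpace Finset

/-- Stability of the implicit Euler Galerkin scheme:
`‖uⁿ‖ + √(κ_min/Q)·Δt·Σ_{j=1}^{n} p(u^j) ≤ ‖u⁰‖ + Δt·Σ_{j=1}^{n} ‖f^j‖`. -/
theorem implicit_euler_stability
    {E : Type*} [NormedAddCommGroup E] [InnerProductSpace ℝ E]
    (a : E →ₗ[ℝ] E →ₗ[ℝ] ℝ)
    (hsymm : ∀ u v : E, a u v = a v u)
    (hpsd : ∀ v : E, 0 ≤ a v v)
    (Q : ℝ) (hQ : 0 < Q)
    (hpoin : ∀ v : E, ‖v‖ ^ 2 ≤ Q * a v v)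
    (p : Seminorm ℝ E)
    (κmin : ℝ) (hκ : 0 < κmin)
    (hκp : ∀ v : E, κmin * (p v) ^ 2 ≤ a v v)
    (V : Submodule ℝ E)
    (n : ℕ) (u f : ℕ → E) (Δt : ℝ) (hΔt : 0 < Δt)
    (humem : ∀ j ≤ n, u j ∈ V)
    (hscheme : ∀ j, 1 ≤ j → j ≤ n → ∀ v ∈ V,
      ⟪u j - u (j - 1), v⟫ + Δt * a (u j) v = Δt * ⟪f j, v⟫) :
    ‖u n‖ + Real.sqrt (κmin / Q) * Δt * ∑ j ∈ Icc 1 n, p (u j)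
      ≤ ‖u 0‖ + Δt * ∑ j ∈ Icc 1 n, ‖f j‖ := by
  have key : ∀ v : E, Real.sqrt (κmin / Q) * p v * ‖v‖ ≤ a v v := by
    intro v
    refine abs_le_of_sq_le_sq' ?_ (hpsd v) |>.2
    have h1 : (Real.sqrt (κmin / Q)) ^ 2 = κmin / Q := Real.sq_sqrt (by positivity)
    have h2 : (κmin * (p v) ^ 2) * ‖v‖ ^ 2 ≤ a v v * (Q * a v v) :=
      mul_le_mul (hκp v) (hpoin v) (by positivity) (hpsd v)
    rw [mul_pow, mul_pow, h1]
    have h3 : κmin / Q * p v ^ 2 * ‖v‖ ^ 2 = ((κmin * (p v) ^ 2) * ‖v‖ ^ 2) / Q := by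
      field_simp
    rw [h3, div_le_iff₀ hQ]
    linarith
  have step : ∀ j, j + 1 ≤ n →
      ‖u (j + 1)‖ + Real.sqrt (κmin / Q) * Δt * p (u (j + 1))
        ≤ ‖u j‖ + Δt * ‖f (j + 1)‖ := by
    intro j hj
    have h := hscheme (j + 1) (by omega) hj (u (j + 1)) (humem _ hj)
    rw [Nat.add_sub_cancel, inner_sub_left, real_inner_self_eq_norm_sq] at h
    rcases (norm_nonneg (u (j + 1))).eq_or_lt with h0 | h0
    · have hz : u (j + 1) = 0 := norm_eq_zero.mp h0.symm
      rw [hz, norm_zero, map_zero]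
      have : 0 ≤ ‖u j‖ + Δt * ‖f (j + 1)‖ := by positivity
      linarith
    · have h1 := real_inner_le_norm (u j) (u (j + 1))
      have h2 := mul_le_mul_of_nonneg_left (real_inner_le_norm (f (j + 1)) (u (j + 1))) hΔt.le
      have h3 := mul_le_mul_of_nonneg_left (key (u (j + 1))) hΔt.le
      refine le_of_mul_le_mul_right ?_ h0
      linarith
  have main : ∀ m, m ≤ n →
      ‖u m‖ + Real.sqrt (κmin / Q) * Δt * ∑ j ∈ Icc 1 m, p (u j)
        ≤ ‖u 0‖ + Δt * ∑ j ∈ Icc 1 m, ‖f j‖ := by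
    intro m
    induction m with
    | zero => intro _; simp
    | succ m ih =>
      intro hm
      rw [sum_Icc_succ_top (by omega), sum_Icc_succ_top (by omega)]
      have := ih (by omega)
      have := step m hm
      linarith
  exact main n le_rfl
end

section
/- Let u⁰,…,uⁿ ∈ V be an implicit Euler Galerkin solution in V for the form a, and let w⁰,…,wⁿ ∈ V be an implicit Euler Galerkin solution in V for the form a′, both with the same time step Δt > 0 and the same data f¹,…,fⁿ. Set e^j = u^j − w^j. Then for every j = 1,…,n one has ‖e^j‖² ≤ ‖e^{j−1}‖² + (Δt/(2κ₁))·δ²·p(w^j)². -/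
open RealInnerProductSpace Finset

/-- One-step perturbation estimate for two implicit Euler Galerkin solutions with
perturbed bilinear forms: `‖e^j‖² ≤ ‖e^{j−1}‖² + (Δt/(2κ₁))·δ²·p(w^j)²`. -/
theorem implicit_euler_coefficient_perturbation_step
    {E : Type*} [NormedAddCommGroup E] [InnerProductSpace ℝ E]
    (a a' : E →ₗ[ℝ] E →ₗ[ℝ] ℝ)
    (hsymm : ∀ u v : E, a u v = a v u)
    (hsymm' : ∀ u v : E, a' u v = a' v u)
    (hpsd : ∀ v : E, 0 ≤ a v v)
    (hpsd' : ∀ v : E, 0 ≤ a' v v)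
    (p : Seminorm ℝ E)
    (κ₁ κ₂ : ℝ) (hκ₁ : 0 < κ₁) (hκ₂ : 0 < κ₂)
    (hκ₁p : ∀ v : E, κ₁ * (p v) ^ 2 ≤ a v v)
    (hκ₂p : ∀ v : E, κ₂ * (p v) ^ 2 ≤ a' v v)
    (δ : ℝ) (hδ : 0 ≤ δ)
    (hpert : ∀ u v : E, |a u v - a' u v| ≤ δ * p u * p v)
    (V : Submodule ℝ E)
    (n : ℕ) (u w f : ℕ → E) (Δt : ℝ) (hΔt : 0 < Δt)
    (humem : ∀ j ≤ n, u j ∈ V)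
    (hwmem : ∀ j ≤ n, w j ∈ V)
    (hscheme : ∀ j, 1 ≤ j → j ≤ n → ∀ v ∈ V,
      ⟪u j - u (j - 1), v⟫ + Δt * a (u j) v = Δt * ⟪f j, v⟫)
    (hscheme' : ∀ j, 1 ≤ j → j ≤ n → ∀ v ∈ V,
      ⟪w j - w (j - 1), v⟫ + Δt * a' (w j) v = Δt * ⟪f j, v⟫) :
    ∀ j, 1 ≤ j → j ≤ n →
      ‖u j - w j‖ ^ 2
        ≤ ‖u (j - 1) - w (j - 1)‖ ^ 2 + (Δt / (2 * κ₁)) * δ ^ 2 * (p (w j)) ^ 2 := by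
  intro j h1 hn
  have hV : u j - w j ∈ V := V.sub_mem (humem j hn) (hwmem j hn)
  have A := hscheme j h1 hn _ hV
  have B := hscheme' j h1 hn _ hV
  have hp := (abs_le.mp (hpert (w j) (u j - w j))).1
  have hk := hκ₁p (u j - w j)
  have hae : a (u j - w j) (u j - w j) = a (u j) (u j - w j) - a (w j) (u j - w j) := by
    rw [map_sub a, LinearMap.sub_apply]
  have hin : ⟪u j - u (j - 1), u j - w j⟫ - ⟪w j - w (j - 1), u j - w j⟫
      = ‖u j - w j‖ ^ 2 - ⟪u (j - 1) - w (j - 1), u j - w j⟫ := by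
    rw [← real_inner_self_eq_norm_sq, ← inner_sub_left, ← inner_sub_left]
    congr 1
    abel
  have hsq := norm_sub_sq_real (u (j - 1) - w (j - 1)) (u j - w j)
  have hsq0 := sq_nonneg ‖u (j - 1) - w (j - 1) - (u j - w j)‖
  have young : δ * p (w j) * p (u j - w j) - κ₁ * p (u j - w j) ^ 2
      ≤ δ ^ 2 * p (w j) ^ 2 / (4 * κ₁) := by
    rw [le_div_iff₀ (by positivity)]
    nlinarith [sq_nonneg (δ * p (w j) - 2 * κ₁ * p (u j - w j))]
  have hd : a' (w j) (u j - w j) - a (u j) (u j - w j)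
      ≤ δ ^ 2 * p (w j) ^ 2 / (4 * κ₁) := by linarith
  have hm := mul_le_mul_of_nonneg_left hd hΔt.le
  have hr : Δt / (2 * κ₁) * δ ^ 2 * p (w j) ^ 2
      = 2 * (Δt * (δ ^ 2 * p (w j) ^ 2 / (4 * κ₁))) := by
    field_simp
    ring
  rw [hr]
  linarith
end

section
/- Let u⁰,…,uⁿ ∈ V be an implicit Euler Galerkin solution in V for the form a, and let w⁰,…,wⁿ ∈ V be an implicit Euler Galerkin solution in V for the form a′, both with the same time step Δt > 0 and the same data f¹,…,fⁿ, and assume u⁰ = w⁰. Then ‖uⁿ − wⁿ‖² ≤ (Δt·δ²/(2κ₁))·Σ_{j=1}^{n} p(w^j)². -/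
open RealInnerProductSpace Finset

/-- Accumulated perturbation estimate for two implicit Euler Galerkin solutions with
perturbed bilinear forms and equal initial data:
`‖uⁿ − wⁿ‖² ≤ (Δt·δ²/(2κ₁))·Σ_{j=1}^{n} p(w^j)²`. -/
theorem implicit_euler_coefficient_perturbation_sum
    {E : Type*} [NormedAddCommGroup E] [InnerProductSpace ℝ E]
    (a a' : E →ₗ[ℝ] E →ₗ[ℝ] ℝ)
    (hsymm : ∀ u v : E, a u v = a v u)
    (hsymm' : ∀ u v : E, a' u v = a' v u)
    (hpsd : ∀ v : E, 0 ≤ a v v)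
    (hpsd' : ∀ v : E, 0 ≤ a' v v)
    (p : Seminorm ℝ E)
    (κ₁ κ₂ : ℝ) (hκ₁ : 0 < κ₁) (hκ₂ : 0 < κ₂)
    (hκ₁p : ∀ v : E, κ₁ * (p v) ^ 2 ≤ a v v)
    (hκ₂p : ∀ v : E, κ₂ * (p v) ^ 2 ≤ a' v v)
    (δ : ℝ) (hδ : 0 ≤ δ)
    (hpert : ∀ u v : E, |a u v - a' u v| ≤ δ * p u * p v)
    (V : Submodule ℝ E)
    (n : ℕ) (u w f : ℕ → E) (Δt : ℝ) (hΔt : 0 < Δt)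
    (humem : ∀ j ≤ n, u j ∈ V)
    (hwmem : ∀ j ≤ n, w j ∈ V)
    (hscheme : ∀ j, 1 ≤ j → j ≤ n → ∀ v ∈ V,
      ⟪u j - u (j - 1), v⟫ + Δt * a (u j) v = Δt * ⟪f j, v⟫)
    (hscheme' : ∀ j, 1 ≤ j → j ≤ n → ∀ v ∈ V,
      ⟪w j - w (j - 1), v⟫ + Δt * a' (w j) v = Δt * ⟪f j, v⟫)
    (hinit : u 0 = w 0) :
    ‖u n - w n‖ ^ 2 ≤ (Δt * δ ^ 2 / (2 * κ₁)) * ∑ j ∈ Icc 1 n, (p (w j)) ^ 2 := by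
  have key : ∀ k, k ≤ n → ‖u k - w k‖ ^ 2 ≤
      (Δt * δ ^ 2 / (2 * κ₁)) * ∑ j ∈ Icc 1 k, (p (w j)) ^ 2 := by
    intro k
    induction k with
    | zero => intro _; simp [hinit]
    | succ k ih =>
      intro hk
      have ih' := ih (by omega)
      rw [Finset.sum_Icc_succ_top (by omega), mul_add]
      have hv : u (k + 1) - w (k + 1) ∈ V := V.sub_mem (humem _ hk) (hwmem _ hk)
      have h1 := hscheme (k + 1) (by omega) hk _ hv
      have h2 := hscheme' (k + 1) (by omega) hk _ hv
      simp only [Nat.add_sub_cancel] at h1 h2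
      have h3 := hκ₁p (u (k + 1) - w (k + 1))
      have h4 := (abs_le.mp (hpert (w (k + 1)) (u (k + 1) - w (k + 1)))).1
      have hsplit : a (u (k + 1)) (u (k + 1) - w (k + 1))
          = a (u (k + 1) - w (k + 1)) (u (k + 1) - w (k + 1))
            + a (w (k + 1)) (u (k + 1) - w (k + 1)) := by
        rw [← LinearMap.add_apply, ← map_add, sub_add_cancel]
      have hin : ⟪u (k + 1) - u k, u (k + 1) - w (k + 1)⟫
          - ⟪w (k + 1) - w k, u (k + 1) - w (k + 1)⟫
          = ‖u (k + 1) - w (k + 1)‖ ^ 2 - ⟪u k - w k, u (k + 1) - w (k + 1)⟫ := by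
        rw [← real_inner_self_eq_norm_sq, ← inner_sub_left, ← inner_sub_left]
        congr 1
        abel
      have hcs : 2 * ⟪u k - w k, u (k + 1) - w (k + 1)⟫
          ≤ ‖u k - w k‖ ^ 2 + ‖u (k + 1) - w (k + 1)‖ ^ 2 := by
        have := real_inner_le_norm (u k - w k) (u (k + 1) - w (k + 1))
        nlinarith [sq_nonneg (‖u k - w k‖ - ‖u (k + 1) - w (k + 1)‖)]
      rw [hsplit] at h1
      generalize a (u (k + 1) - w (k + 1)) (u (k + 1) - w (k + 1)) = A at *
      generalize a (w (k + 1)) (u (k + 1) - w (k + 1)) = B at *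
      generalize a' (w (k + 1)) (u (k + 1) - w (k + 1)) = B' at *
      generalize p (u (k + 1) - w (k + 1)) = P at *
      generalize p (w (k + 1)) = W at *
      have hyoung : δ * W * P - κ₁ * P ^ 2 ≤ δ ^ 2 / (4 * κ₁) * W ^ 2 := by
        have : δ ^ 2 / (4 * κ₁) * W ^ 2 - (δ * W * P - κ₁ * P ^ 2)
            = (δ * W - 2 * κ₁ * P) ^ 2 / (4 * κ₁) := by
          field_simp
          ring
        have h0 : 0 ≤ (δ * W - 2 * κ₁ * P) ^ 2 / (4 * κ₁) := by positivity
        linarith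
      have hstep : Δt * (-A - (B - B')) ≤ Δt * (δ ^ 2 / (4 * κ₁) * W ^ 2) :=
        mul_le_mul_of_nonneg_left (by linarith) hΔt.le
      have heq : Δt * δ ^ 2 / (2 * κ₁) * W ^ 2 = 2 * (Δt * (δ ^ 2 / (4 * κ₁) * W ^ 2)) := by
        field_simp
        ring
      rw [heq]
      linarith
  exact key n le_rfl
end

section
/- (Continuity of the fine-scale solution with respect to the coefficient; explicit form of the e₁ and e₄ estimates.) Assume in addition the Poincaré inequality ‖v‖² ≤ Q·a′(v,v) for all v ∈ E with a constant Q > 0. Let u⁰,…,uⁿ ∈ V be an implicit Euler Galerkin solution in V for the form a, and let w⁰,…,wⁿ ∈ V be an implicit Euler Galerkin solution in V for the form a′, both with the same time step Δt > 0 and the same data f¹,…,fⁿ, and assume u⁰ = w⁰. Then ‖uⁿ − wⁿ‖² ≤ δ²·Q·(‖w⁰‖ + Δt·Σ_{j=1}^{n}‖f^j‖)² / (2·κ₁·κ₂·Δt). -/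
open RealInnerProductSpace Finset

/-- Continuity of the fine-scale solution with respect to the coefficient
(explicit form of the `e₁` and `e₄` estimates):
`‖uⁿ − wⁿ‖² ≤ δ²·Q·(‖w⁰‖ + Δt·Σ‖f^j‖)² / (2·κ₁·κ₂·Δt)`. -/
theorem implicit_euler_coefficient_continuity
    {E : Type*} [NormedAddCommGroup E] [InnerProductSpace ℝ E]
    (a a' : E →ₗ[ℝ] E →ₗ[ℝ] ℝ)
    (hsymm : ∀ u v : E, a u v = a v u)
    (hsymm' : ∀ u v : E, a' u v = a' v u)
    (hpsd : ∀ v : E, 0 ≤ a v v)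
    (hpsd' : ∀ v : E, 0 ≤ a' v v)
    (p : Seminorm ℝ E)
    (κ₁ κ₂ : ℝ) (hκ₁ : 0 < κ₁) (hκ₂ : 0 < κ₂)
    (hκ₁p : ∀ v : E, κ₁ * (p v) ^ 2 ≤ a v v)
    (hκ₂p : ∀ v : E, κ₂ * (p v) ^ 2 ≤ a' v v)
    (δ : ℝ) (hδ : 0 ≤ δ)
    (hpert : ∀ u v : E, |a u v - a' u v| ≤ δ * p u * p v)
    (Q : ℝ) (hQ : 0 < Q)
    (hpoin' : ∀ v : E, ‖v‖ ^ 2 ≤ Q * a' v v)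
    (V : Submodule ℝ E)
    (n : ℕ) (u w f : ℕ → E) (Δt : ℝ) (hΔt : 0 < Δt)
    (humem : ∀ j ≤ n, u j ∈ V)
    (hwmem : ∀ j ≤ n, w j ∈ V)
    (hscheme : ∀ j, 1 ≤ j → j ≤ n → ∀ v ∈ V,
      ⟪u j - u (j - 1), v⟫ + Δt * a (u j) v = Δt * ⟪f j, v⟫)
    (hscheme' : ∀ j, 1 ≤ j → j ≤ n → ∀ v ∈ V,
      ⟪w j - w (j - 1), v⟫ + Δt * a' (w j) v = Δt * ⟪f j, v⟫)
    (hinit : u 0 = w 0) :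
    ‖u n - w n‖ ^ 2
      ≤ δ ^ 2 * Q * (‖w 0‖ + Δt * ∑ j ∈ Icc 1 n, ‖f j‖) ^ 2 / (2 * κ₁ * κ₂ * Δt) := by
  have key : ∀ k, k ≤ n → ‖w k‖ ≤ ‖w 0‖ + Δt * ∑ j ∈ Icc 1 k, ‖f j‖ ∧
      ‖u k - w k‖ ^ 2 * (2 * κ₁ * κ₂ * Δt) + δ ^ 2 * Q * ‖w k‖ ^ 2
        ≤ δ ^ 2 * Q * (‖w 0‖ + Δt * ∑ j ∈ Icc 1 k, ‖f j‖) ^ 2 := by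
    intro k
    induction k with
    | zero => intro _; simp [hinit]
    | succ k ih =>
      intro hk
      obtain ⟨h1, h2⟩ := ih (by omega)
      rw [Finset.sum_Icc_succ_top (by omega : 1 ≤ k + 1)]
      set M := ‖w 0‖ + Δt * ∑ j ∈ Icc 1 k, ‖f j‖ with hM
      have hM' : ‖w 0‖ + Δt * (∑ j ∈ Icc 1 k, ‖f j‖ + ‖f (k + 1)‖)
          = M + Δt * ‖f (k + 1)‖ := by rw [hM]; ring
      rw [hM']
      have hwm := hwmem (k + 1) hk
      have hem := V.sub_mem (humem (k + 1) hk) hwm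
      have E1 := hscheme' (k + 1) (by omega) hk _ hwm
      have E2 := hscheme' (k + 1) (by omega) hk _ hem
      have E3 := hscheme (k + 1) (by omega) hk _ hem
      simp only [Nat.add_sub_cancel] at E1 E2 E3
      set s := Δt * ‖f (k + 1)‖ with hs
      have hs0 : 0 ≤ s := by positivity
      set x := ‖w (k + 1)‖ with hx
      have hx0 : 0 ≤ x := norm_nonneg _
      set y := ‖w k‖ with hy
      have hy0 : 0 ≤ y := norm_nonneg _
      set A := a' (w (k + 1)) (w (k + 1)) with hA
      have hxA : x ^ 2 ≤ Q * A := hpoin' _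
      have hA0 : 0 ≤ A := hpsd' _
      have hen : x ^ 2 + Δt * A ≤ (y + s) * x := by
        have c1 := real_inner_le_norm (f (k + 1)) (w (k + 1))
        have c2 := real_inner_le_norm (w k) (w (k + 1))
        rw [inner_sub_left, real_inner_self_eq_norm_sq] at E1
        have c3 := mul_le_mul_of_nonneg_left c1 hΔt.le
        rw [← hx] at c2 c3 E1
        rw [hs]
        linarith
      have hxg : Δt * x ≤ Q * (y + s - x) := by
        rcases hx0.eq_or_lt with h | h
        · rw [← h]; have := mul_nonneg hQ.le (add_nonneg hy0 hs0); linarith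
        · refine le_of_mul_le_mul_right ?_ h
          linarith [mul_le_mul_of_nonneg_left hxA hΔt.le, mul_le_mul_of_nonneg_left hen hQ.le]
      have hxle : x ≤ y + s := by
        by_contra hc
        push Not at hc
        linarith [mul_nonneg hΔt.le hx0, mul_pos hQ (sub_pos.2 hc)]
      have hAb : Δt * Δt * A ≤ Q * ((y + s) ^ 2 - x ^ 2) := by
        have d1 := mul_le_mul_of_nonneg_left hen hΔt.le
        have d2 := mul_le_mul_of_nonneg_right hxg (sub_nonneg.2 hxle)
        have d3 := mul_nonneg hQ.le (mul_nonneg hx0 (sub_nonneg.2 hxle))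
        linarith
      have herr : 2 * κ₁ * κ₂ * (‖u (k + 1) - w (k + 1)‖ ^ 2 - ‖u k - w k‖ ^ 2)
          ≤ δ ^ 2 * (Δt * A) := by
        have hp1 := (abs_le.1 (hpert (w (k + 1)) (u (k + 1) - w (k + 1)))).1
        have hk1 := hκ₁p (u (k + 1) - w (k + 1))
        have hk2 := hκ₂p (w (k + 1))
        have c2 := real_inner_le_norm (u k - w k) (u (k + 1) - w (k + 1))
        have hee := real_inner_self_eq_norm_sq (u (k + 1) - w (k + 1))
        have hu : a (u (k + 1)) (u (k + 1) - w (k + 1))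
            = a (u (k + 1) - w (k + 1)) (u (k + 1) - w (k + 1))
              + a (w (k + 1)) (u (k + 1) - w (k + 1)) := by
          rw [map_sub a, LinearMap.sub_apply]; ring
        rw [hu] at E3
        have hin : ⟪u (k + 1) - u k, u (k + 1) - w (k + 1)⟫
            - ⟪w (k + 1) - w k, u (k + 1) - w (k + 1)⟫
            = ⟪u (k + 1) - w (k + 1), u (k + 1) - w (k + 1)⟫
              - ⟪u k - w k, u (k + 1) - w (k + 1)⟫ := by
          rw [← inner_sub_left, ← inner_sub_left]; congr 1; abel
        rw [hee] at hin
        rw [← hA] at hk2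
        generalize u (k + 1) - w (k + 1) = e at *
        generalize p e = P at *
        generalize p (w (k + 1)) = W at *
        generalize ‖e‖ = X at *
        generalize ‖u k - w k‖ = Y at *
        have g1 : X ^ 2 - Y ^ 2 ≤ 2 * Δt * (δ * W * P - κ₁ * P ^ 2) := by
          have t1 := mul_le_mul_of_nonneg_left hp1 hΔt.le
          have t2 := mul_le_mul_of_nonneg_left hk1 hΔt.le
          linarith [sq_nonneg (X - Y)]
        have g2 : 2 * κ₁ * (X ^ 2 - Y ^ 2) ≤ Δt * (δ ^ 2 * W ^ 2) := by
          have t1 := mul_le_mul_of_nonneg_left g1 hκ₁.le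
          have t2 := mul_nonneg hΔt.le (sq_nonneg (δ * W - 2 * κ₁ * P))
          linarith
        have g3 := mul_le_mul_of_nonneg_left g2 hκ₂.le
        have g4 := mul_le_mul_of_nonneg_left hk2 (mul_nonneg hΔt.le (sq_nonneg δ))
        linarith
      refine ⟨by linarith, ?_⟩
      have r1 := mul_le_mul_of_nonneg_left herr hΔt.le
      have r2 := mul_le_mul_of_nonneg_left hAb (sq_nonneg δ)
      have r3 : 0 ≤ δ ^ 2 * Q * (s * (M - y)) :=
        mul_nonneg (by positivity) (mul_nonneg hs0 (by linarith))
      linarith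
  have h := (key n le_rfl).2
  rw [le_div_iff₀ (by positivity)]
  have : 0 ≤ δ ^ 2 * Q * ‖w n‖ ^ 2 := by positivity
  linarith
end

section
/- Let u_h⁰,…,u_hⁿ ∈ V_h be an implicit Euler Galerkin solution in V_h and u_H⁰,…,u_Hⁿ ∈ V_ms an implicit Euler Galerkin solution in V_ms, both for the form a, the same time step Δt > 0 and the same data f¹,…,fⁿ. Set θ^j = u_H^j − R_H u_h^j. Then for every j = 1,…,n one has ‖θ^j‖ ≤ ‖θ^{j−1}‖ + ‖(u_h^j − u_h^{j−1}) − R_H(u_h^j − u_h^{j−1})‖. -/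
open RealInnerProductSpace

/-- One-step estimate for `θ^j = u_H^j − R_H u_h^j`:
`‖θ^j‖ ≤ ‖θ^{j−1}‖ + ‖(u_h^j − u_h^{j−1}) − R_H(u_h^j − u_h^{j−1})‖`. -/
theorem theta_one_step_estimate
    {E : Type*} [NormedAddCommGroup E] [InnerProductSpace ℝ E]
    (a : E →ₗ[ℝ] E →ₗ[ℝ] ℝ)
    (hsymm : ∀ u v : E, a u v = a v u)
    (hpsd : ∀ v : E, 0 ≤ a v v)
    (Vms Vh : Submodule ℝ E) (hsub : Vms ≤ Vh)
    (RH : E →ₗ[ℝ] E) (hRHmem : ∀ u : E, RH u ∈ Vms)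
    (hRitz : ∀ u : E, ∀ v ∈ Vms, a (u - RH u) v = 0)
    (n : ℕ) (uh uH f : ℕ → E) (Δt : ℝ) (hΔt : 0 < Δt)
    (huhmem : ∀ j ≤ n, uh j ∈ Vh)
    (huHmem : ∀ j ≤ n, uH j ∈ Vms)
    (hschemeh : ∀ j, 1 ≤ j → j ≤ n → ∀ v ∈ Vh,
      ⟪uh j - uh (j - 1), v⟫ + Δt * a (uh j) v = Δt * ⟪f j, v⟫)
    (hschemeH : ∀ j, 1 ≤ j → j ≤ n → ∀ v ∈ Vms,
      ⟪uH j - uH (j - 1), v⟫ + Δt * a (uH j) v = Δt * ⟪f j, v⟫) :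
    ∀ j, 1 ≤ j → j ≤ n →
      ‖uH j - RH (uh j)‖
        ≤ ‖uH (j - 1) - RH (uh (j - 1))‖
          + ‖(uh j - uh (j - 1)) - RH (uh j - uh (j - 1))‖ := by
  intro j h1 hn
  have hm : uH j - RH (uh j) ∈ Vms := Vms.sub_mem (huHmem j hn) (hRHmem _)
  have e1 := hschemeh j h1 hn _ (hsub hm)
  have e2 := hschemeH j h1 hn _ hm
  have e3 := hRitz (uh j) _ hm
  have e4 := hpsd (uH j - RH (uh j))
  have e5 : a (uH j - RH (uh j)) (uH j - RH (uh j))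
      = a (uH j) (uH j - RH (uh j)) - a (RH (uh j)) (uH j - RH (uh j)) := by
    rw [map_sub a, LinearMap.sub_apply]
  rw [map_sub a, LinearMap.sub_apply] at e3
  have e6 := mul_nonneg hΔt.le e4
  have e7 : a (uh j) (uH j - RH (uh j)) = a (RH (uh j)) (uH j - RH (uh j)) := by linarith
  rw [e5, mul_sub] at e6
  rw [e7] at e1
  have key : ∀ t : E, ⟪uH j - RH (uh j), t⟫
      = ⟪(uH (j - 1) - RH (uh (j - 1))) + ((uh j - uh (j - 1)) - RH (uh j - uh (j - 1))), t⟫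
        + (⟪uH j - uH (j - 1), t⟫ - ⟪uh j - uh (j - 1), t⟫) := by
    intro t
    rw [← inner_sub_left, ← inner_add_left, map_sub]
    congr 1
    abel
  have k := key (uH j - RH (uh j))
  rw [real_inner_self_eq_norm_mul_norm] at k
  have c := real_inner_le_norm
    ((uH (j - 1) - RH (uh (j - 1))) + ((uh j - uh (j - 1)) - RH (uh j - uh (j - 1))))
    (uH j - RH (uh j))
  refine le_trans ?_ (norm_add_le _ _)
  rcases (norm_nonneg (uH j - RH (uh j))).eq_or_lt with h | h
  · rw [← h]
    exact norm_nonneg _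
  · refine le_of_mul_le_mul_right ?_ h
    linarith
end

section
/- (Error between the fine-scale and the multiscale implicit Euler solutions; explicit form of the e₂ estimate.) Let u_h⁰,…,u_hⁿ ∈ V_h be an implicit Euler Galerkin solution in V_h and u_H⁰,…,u_Hⁿ ∈ V_ms an implicit Euler Galerkin solution in V_ms, both for the form a, the same time step Δt > 0 and the same data f¹,…,fⁿ. Set ρ^j = u_h^j − R_H u_h^j for j = 0,…,n. Then ‖u_hⁿ − u_Hⁿ‖ ≤ ‖ρⁿ‖ + ‖u_h⁰ − u_H⁰‖ + ‖ρ⁰‖ + Σ_{j=1}^{n} (‖ρ^j‖ + ‖ρ^{j−1}‖). -/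
open RealInnerProductSpace Finset

/-- Error between the fine-scale and the multiscale implicit Euler solutions
(explicit form of the `e₂` estimate), with `ρ^j = u_h^j − R_H u_h^j`:
`‖u_hⁿ − u_Hⁿ‖ ≤ ‖ρⁿ‖ + ‖u_h⁰ − u_H⁰‖ + ‖ρ⁰‖ + Σ_{j=1}^{n} (‖ρ^j‖ + ‖ρ^{j−1}‖)`. -/
theorem fine_multiscale_error_estimate
    {E : Type*} [NormedAddCommGroup E] [InnerProductSpace ℝ E]
    (a : E →ₗ[ℝ] E →ₗ[ℝ] ℝ)
    (hsymm : ∀ u v : E, a u v = a v u)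
    (hpsd : ∀ v : E, 0 ≤ a v v)
    (Vms Vh : Submodule ℝ E) (hsub : Vms ≤ Vh)
    (RH : E →ₗ[ℝ] E) (hRHmem : ∀ u : E, RH u ∈ Vms)
    (hRitz : ∀ u : E, ∀ v ∈ Vms, a (u - RH u) v = 0)
    (n : ℕ) (uh uH f : ℕ → E) (Δt : ℝ) (hΔt : 0 < Δt)
    (huhmem : ∀ j ≤ n, uh j ∈ Vh)
    (huHmem : ∀ j ≤ n, uH j ∈ Vms)
    (hschemeh : ∀ j, 1 ≤ j → j ≤ n → ∀ v ∈ Vh,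
      ⟪uh j - uh (j - 1), v⟫ + Δt * a (uh j) v = Δt * ⟪f j, v⟫)
    (hschemeH : ∀ j, 1 ≤ j → j ≤ n → ∀ v ∈ Vms,
      ⟪uH j - uH (j - 1), v⟫ + Δt * a (uH j) v = Δt * ⟪f j, v⟫) :
    ‖uh n - uH n‖
      ≤ ‖uh n - RH (uh n)‖ + ‖uh 0 - uH 0‖ + ‖uh 0 - RH (uh 0)‖
        + ∑ j ∈ Icc 1 n, (‖uh j - RH (uh j)‖ + ‖uh (j - 1) - RH (uh (j - 1))‖) := by
  have step : ∀ j, 1 ≤ j → j ≤ n → ‖RH (uh j) - uH j‖ ≤ ‖RH (uh (j - 1)) - uH (j - 1)‖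
      + (‖uh j - RH (uh j)‖ + ‖uh (j - 1) - RH (uh (j - 1))‖) := by
    intro j h1 hj
    have hv : RH (uh j) - uH j ∈ Vms := Vms.sub_mem (hRHmem _) (huHmem j hj)
    have e1 := hschemeh j h1 hj _ (hsub hv)
    have e2 := hschemeH j h1 hj _ hv
    have e3 := hRitz (uh j) _ hv
    have e4 := hpsd (RH (uh j) - uH j)
    have e5 : a (uh j) (RH (uh j) - uH j) - a (uH j) (RH (uh j) - uH j)
        = a (RH (uh j) - uH j) (RH (uh j) - uH j) := by
      have h1 : a (uh j - RH (uh j)) (RH (uh j) - uH j)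
          = a (uh j) (RH (uh j) - uH j) - a (RH (uh j)) (RH (uh j) - uH j) := by
        rw [map_sub a, LinearMap.sub_apply]
      have h2 : a (RH (uh j) - uH j) (RH (uh j) - uH j)
          = a (RH (uh j)) (RH (uh j) - uH j) - a (uH j) (RH (uh j) - uH j) := by
        rw [map_sub a, LinearMap.sub_apply]
      linarith
    have e6 := mul_nonneg hΔt.le e4
    rw [← e5, mul_sub] at e6
    generalize hθ : RH (uh j) - uH j = θ at *
    generalize hθ' : RH (uh (j - 1)) - uH (j - 1) = θ' at *
    generalize hρ : uh j - RH (uh j) = ρ at *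
    generalize hρ' : uh (j - 1) - RH (uh (j - 1)) = ρ' at *
    have e7 : uh j - uh (j - 1) - (uH j - uH (j - 1)) = θ - (θ' + ρ' - ρ) := by
      rw [← hθ, ← hθ', ← hρ, ← hρ']; abel
    have e8 : ⟪θ - (θ' + ρ' - ρ), θ⟫ ≤ 0 := by
      rw [← e7, inner_sub_left]; linarith
    rw [inner_sub_left, real_inner_self_eq_norm_sq] at e8
    have e9 := real_inner_le_norm (θ' + ρ' - ρ) θ
    have e10 : ‖θ' + ρ' - ρ‖ ≤ ‖θ'‖ + (‖ρ‖ + ‖ρ'‖) := by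
      have := norm_sub_le (θ' + ρ') ρ
      have := norm_add_le θ' ρ'
      linarith
    refine le_trans ?_ e10
    by_contra! hc
    have hp : 0 < ‖θ‖ := lt_of_le_of_lt (norm_nonneg _) hc
    nlinarith
  have main : ∀ m, m ≤ n → ‖RH (uh m) - uH m‖ ≤ ‖RH (uh 0) - uH 0‖
      + ∑ j ∈ Icc 1 m, (‖uh j - RH (uh j)‖ + ‖uh (j - 1) - RH (uh (j - 1))‖) := by
    intro m
    induction m with
    | zero => intro _; simp
    | succ k ih =>
      intro hk
      rw [Finset.sum_Icc_succ_top (by omega)]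
      have h1 := step (k + 1) (by omega) hk
      have h2 := ih (by omega)
      simp only [Nat.add_sub_cancel] at h1 ⊢
      linarith
  have h0 : ‖RH (uh 0) - uH 0‖ ≤ ‖uh 0 - uH 0‖ + ‖uh 0 - RH (uh 0)‖ := by
    have := norm_sub_le (uh 0 - uH 0) (uh 0 - RH (uh 0))
    rwa [sub_sub_sub_cancel_left] at this
  have hn : ‖uh n - uH n‖ ≤ ‖uh n - RH (uh n)‖ + ‖RH (uh n) - uH n‖ :=
    norm_sub_le_norm_sub_add_norm_sub _ _ _
  have := main n le_rfl
  linarith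
end

section
/- Assume in addition the Poincaré inequality ‖v‖² ≤ Q·a(v,v) for all v ∈ E with a constant Q > 0. Let u_H⁰,…,u_Hⁿ ∈ V_ms be an implicit Euler Galerkin solution in V_ms and p_l⁰,…,p_lⁿ ∈ Q_l an implicit Euler Galerkin solution in Q_l, both for the form a, the same time step Δt > 0 and the same data f¹,…,fⁿ. Set d^j = u_H^j − S u_H^j, q^j = S u_H^j − p_l^j, and z^j = (S(u_H^j − u_H^{j−1}) − (u_H^j − u_H^{j−1}))/Δt. Then for every j = 1,…,n one has ‖q^j‖² ≤ ‖q^{j−1}‖² + Δt·(‖d^j‖_a² + Q²·‖z^j‖_a²). -/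
open RealInnerProductSpace

/-- One-step estimate for `q^j = S u_H^j − p_l^j` with `d^j = u_H^j − S u_H^j` and
`z^j = (S(u_H^j − u_H^{j−1}) − (u_H^j − u_H^{j−1}))/Δt`:
`‖q^j‖² ≤ ‖q^{j−1}‖² + Δt·(‖d^j‖_a² + Q²·‖z^j‖_a²)`. -/
theorem pod_one_step_estimate
    {E : Type*} [NormedAddCommGroup E] [InnerProductSpace ℝ E]
    (a : E →ₗ[ℝ] E →ₗ[ℝ] ℝ)
    (hsymm : ∀ u v : E, a u v = a v u)
    (hpsd : ∀ v : E, 0 ≤ a v v)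
    (Q : ℝ) (hQ : 0 < Q)
    (hpoin : ∀ v : E, ‖v‖ ^ 2 ≤ Q * a v v)
    (Ql Vms : Submodule ℝ E) (hsub : Ql ≤ Vms)
    (S : E →ₗ[ℝ] E) (hSmem : ∀ x : E, S x ∈ Ql)
    (n : ℕ) (uH pl f : ℕ → E) (Δt : ℝ) (hΔt : 0 < Δt)
    (huHmem : ∀ j ≤ n, uH j ∈ Vms)
    (hplmem : ∀ j ≤ n, pl j ∈ Ql)
    (hschemeH : ∀ j, 1 ≤ j → j ≤ n → ∀ v ∈ Vms,
      ⟪uH j - uH (j - 1), v⟫ + Δt * a (uH j) v = Δt * ⟪f j, v⟫)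
    (hschemel : ∀ j, 1 ≤ j → j ≤ n → ∀ v ∈ Ql,
      ⟪pl j - pl (j - 1), v⟫ + Δt * a (pl j) v = Δt * ⟪f j, v⟫) :
    ∀ j, 1 ≤ j → j ≤ n →
      ‖S (uH j) - pl j‖ ^ 2
        ≤ ‖S (uH (j - 1)) - pl (j - 1)‖ ^ 2
          + Δt * (Real.sqrt (a (uH j - S (uH j)) (uH j - S (uH j))) ^ 2
              + Q ^ 2 * Real.sqrt
                  (a (Δt⁻¹ • (S (uH j - uH (j - 1)) - (uH j - uH (j - 1))))
                     (Δt⁻¹ • (S (uH j - uH (j - 1)) - (uH j - uH (j - 1))))) ^ 2) := by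
  intro j hj1 hjn
  rw [Real.sq_sqrt (hpsd _), Real.sq_sqrt (hpsd _)]
  have hqmem : S (uH j) - pl j ∈ Ql := Ql.sub_mem (hSmem _) (hplmem j hjn)
  have h1 := hschemeH j hj1 hjn _ (hsub hqmem)
  have h2 := hschemel j hj1 hjn _ hqmem
  have hz : Δt • (Δt⁻¹ • (S (uH j - uH (j - 1)) - (uH j - uH (j - 1))))
      = S (uH j - uH (j - 1)) - (uH j - uH (j - 1)) := smul_inv_smul₀ hΔt.ne' _
  generalize Δt⁻¹ • (S (uH j - uH (j - 1)) - (uH j - uH (j - 1))) = z at hz ⊢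
  have hd : uH j = (uH j - S (uH j)) + (S (uH j) - pl j) + pl j := by abel
  have hau : a (uH j) (S (uH j) - pl j) = a (uH j - S (uH j)) (S (uH j) - pl j)
      + a (S (uH j) - pl j) (S (uH j) - pl j) + a (pl j) (S (uH j) - pl j) := by
    rw [← LinearMap.add_apply, ← LinearMap.add_apply, ← map_add, ← map_add, ← hd]
  have hdiff : (S (uH j) - pl j) - (S (uH (j - 1)) - pl (j - 1))
      = Δt • z + (uH j - uH (j - 1)) - (pl j - pl (j - 1)) := by
    rw [hz, map_sub]; abel
  have hin := congrArg (fun x => ⟪x, S (uH j) - pl j⟫) hdiff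
  rw [inner_sub_left _ (pl j - pl (j - 1)), inner_add_left, real_inner_smul_left] at hin
  generalize S (uH j) - pl j = q at *
  generalize S (uH (j - 1)) - pl (j - 1) = q' at *
  generalize uH j - S (uH j) = d at *
  have hq : ‖q - q'‖ ^ 2 = 2 * ⟪q - q', q⟫ - ‖q‖ ^ 2 + ‖q'‖ ^ 2 := by
    rw [norm_sub_sq_real, inner_sub_left, real_inner_self_eq_norm_sq, real_inner_comm]; ring
  have h3 : 2 * ⟪z, q⟫ ≤ Q ^ 2 * a z z + a q q := by
    have h := sq_nonneg ‖Q • z - q‖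
    rw [norm_sub_sq_real, norm_smul, mul_pow, real_inner_smul_left, Real.norm_eq_abs,
      sq_abs] at h
    have hz1 := mul_le_mul_of_nonneg_left (hpoin z) (sq_nonneg Q)
    have hq1 := hpoin q
    refine le_of_mul_le_mul_left ?_ hQ
    linarith
  have h4 : -(2 * a d q) ≤ a d d + a q q := by
    have h := hpsd (d + q)
    simp only [map_add, LinearMap.add_apply, hsymm q d] at h
    linarith
  have h5 := mul_le_mul_of_nonneg_left (add_le_add h3 h4) hΔt.le
  have h6 := sq_nonneg ‖q - q'‖
  rw [hau] at h1
  linarith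
end

section
/- (Error between the multiscale and the POD implicit Euler solutions; the e₃ estimate.) Assume in addition the Poincaré inequality ‖v‖² ≤ Q·a(v,v) for all v ∈ E with a constant Q > 0. Let u_H⁰,…,u_Hⁿ ∈ V_ms be an implicit Euler Galerkin solution in V_ms and p_l⁰,…,p_lⁿ ∈ Q_l an implicit Euler Galerkin solution in Q_l, both for the form a, the same time step Δt > 0 and the same data f¹,…,fⁿ, with n ≥ 1 and initial condition p_l⁰ = S u_H⁰. Set d^j = u_H^j − S u_H^j and z^j = (S(u_H^j − u_H^{j−1}) − (u_H^j − u_H^{j−1}))/Δt, and assume Σ_{j=1}^{n} ‖d^j‖_a² + Q²·Σ_{j=1}^{n} ‖z^j‖_a² ≤ Λ for a constant Λ ≥ 0 (in the paper Λ = Σ_{p=l+1}^{M} λ_p, the sum of the discarded POD eigenvalues). Then ‖u_Hⁿ − p_lⁿ‖² ≤ 2·(Δt + Q)·Λ. -/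
open RealInnerProductSpace Finset

/-- Error between the multiscale and the POD implicit Euler solutions
(the `e₃` estimate): if `p_l⁰ = S u_H⁰` and the POD tail bound
`Σ‖d^j‖_a² + Q²·Σ‖z^j‖_a² ≤ Λ` holds, then `‖u_Hⁿ − p_lⁿ‖² ≤ 2·(Δt + Q)·Λ`. -/
theorem multiscale_pod_error_estimate
    {E : Type*} [NormedAddCommGroup E] [InnerProductSpace ℝ E]
    (a : E →ₗ[ℝ] E →ₗ[ℝ] ℝ)
    (hsymm : ∀ u v : E, a u v = a v u)
    (hpsd : ∀ v : E, 0 ≤ a v v)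
    (Q : ℝ) (hQ : 0 < Q)
    (hpoin : ∀ v : E, ‖v‖ ^ 2 ≤ Q * a v v)
    (Ql Vms : Submodule ℝ E) (hsub : Ql ≤ Vms)
    (S : E →ₗ[ℝ] E) (hSmem : ∀ x : E, S x ∈ Ql)
    (n : ℕ) (hn : 1 ≤ n) (uH pl f : ℕ → E) (Δt : ℝ) (hΔt : 0 < Δt)
    (huHmem : ∀ j ≤ n, uH j ∈ Vms)
    (hplmem : ∀ j ≤ n, pl j ∈ Ql)
    (hschemeH : ∀ j, 1 ≤ j → j ≤ n → ∀ v ∈ Vms,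
      ⟪uH j - uH (j - 1), v⟫ + Δt * a (uH j) v = Δt * ⟪f j, v⟫)
    (hschemel : ∀ j, 1 ≤ j → j ≤ n → ∀ v ∈ Ql,
      ⟪pl j - pl (j - 1), v⟫ + Δt * a (pl j) v = Δt * ⟪f j, v⟫)
    (hinit : pl 0 = S (uH 0))
    (Λ : ℝ) (hΛ : 0 ≤ Λ)
    (htail :
      ∑ j ∈ Icc 1 n,
          Real.sqrt (a (uH j - S (uH j)) (uH j - S (uH j))) ^ 2
        + Q ^ 2 * ∑ j ∈ Icc 1 n,
            Real.sqrt
              (a (Δt⁻¹ • (S (uH j - uH (j - 1)) - (uH j - uH (j - 1))))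
                 (Δt⁻¹ • (S (uH j - uH (j - 1)) - (uH j - uH (j - 1))))) ^ 2
        ≤ Λ) :
    ‖uH n - pl n‖ ^ 2 ≤ 2 * (Δt + Q) * Λ := by
  simp only [Real.sq_sqrt (hpsd _)] at htail
  rw [Finset.mul_sum, ← Finset.sum_add_distrib] at htail
  set d : ℕ → E := fun j => uH j - S (uH j) with hd
  set z : ℕ → E := fun j => Δt⁻¹ • (S (uH j - uH (j - 1)) - (uH j - uH (j - 1))) with hz
  set g : ℕ → ℝ := fun j => a (d j) (d j) + Q ^ 2 * a (z j) (z j) with hg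
  have htail' : ∑ j ∈ Icc 1 n, g j ≤ Λ := htail
  have hg0 : ∀ j, 0 ≤ g j := fun j =>
    add_nonneg (hpsd _) (mul_nonneg (sq_nonneg _) (hpsd _))
  have step : ∀ j, j + 1 ≤ n →
      ‖S (uH (j + 1)) - pl (j + 1)‖ ^ 2 ≤ ‖S (uH j) - pl j‖ ^ 2 + Δt * g (j + 1) := by
    intro j hj
    have hmem : S (uH (j + 1)) - pl (j + 1) ∈ Ql := Ql.sub_mem (hSmem _) (hplmem _ hj)
    have h1 := hschemeH (j + 1) (by omega) hj _ (hsub hmem)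
    have h2 := hschemel (j + 1) (by omega) hj _ hmem
    simp only [Nat.add_sub_cancel] at h1 h2
    set θ := S (uH (j + 1)) - pl (j + 1) with hθ
    set θ' := S (uH j) - pl j with hθ'
    have e1 : θ - θ' = Δt • z (j + 1) + ((uH (j + 1) - uH j) - (pl (j + 1) - pl j)) := by
      simp only [hz, hθ, hθ', Nat.add_sub_cancel, smul_smul, mul_inv_cancel₀ hΔt.ne', one_smul,
        map_sub]
      abel
    have e2 : uH (j + 1) = d (j + 1) + θ + pl (j + 1) := by
      simp only [hd, hθ]; abel
    have h3 : ⟪θ - θ', θ⟫ = Δt * ⟪z (j + 1), θ⟫ - Δt * (a (d (j + 1)) θ + a θ θ) := by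
      have h4 : a (uH (j + 1)) θ = a (d (j + 1)) θ + a θ θ + a (pl (j + 1)) θ := by
        conv_lhs => rw [e2]
        simp only [map_add, LinearMap.add_apply]
      rw [h4] at h1
      rw [e1, inner_add_left, inner_sub_left (uH (j + 1) - uH j), real_inner_smul_left]
      linarith
    have h5 : ‖θ'‖ ^ 2 = ‖θ‖ ^ 2 - 2 * ⟪θ - θ', θ⟫ + ‖θ - θ'‖ ^ 2 := by
      have := norm_sub_sq_real θ (θ - θ')
      rw [sub_sub_cancel, real_inner_comm] at this
      exact this
    have h6 : 0 ≤ a (d (j + 1)) (d (j + 1)) + 2 * a (d (j + 1)) θ + a θ θ := by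
      have := hpsd (d (j + 1) + θ)
      simp only [map_add, LinearMap.add_apply] at this
      rw [hsymm θ (d (j + 1))] at this
      linarith
    have h7 : 2 * ⟪z (j + 1), θ⟫ ≤ Q ^ 2 * a (z (j + 1)) (z (j + 1)) + a θ θ := by
      have h8 := norm_sub_sq_real (Q • z (j + 1)) θ
      rw [real_inner_smul_left, norm_smul, mul_pow, Real.norm_eq_abs, sq_abs] at h8
      have h9 := sq_nonneg ‖Q • z (j + 1) - θ‖
      have h10 := mul_le_mul_of_nonneg_left (hpoin (z (j + 1))) (sq_nonneg Q)
      have h11 := hpoin θ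
      refine le_of_mul_le_mul_left ?_ hQ
      linarith
    have h12 : 2 * ⟪θ - θ', θ⟫ ≤ Δt * g (j + 1) := by
      have : 2 * ⟪z (j + 1), θ⟫ - 2 * (a (d (j + 1)) θ + a θ θ) ≤ g (j + 1) := by
        simp only [hg]; linarith
      have := mul_le_mul_of_nonneg_left this hΔt.le
      rw [h3]; linarith
    have := sq_nonneg ‖θ - θ'‖
    linarith
  have main : ∀ m, m ≤ n → ‖S (uH m) - pl m‖ ^ 2 ≤ Δt * ∑ j ∈ Icc 1 m, g j := by
    intro m
    induction m with
    | zero => intro _; simp [hinit]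
    | succ k ih =>
      intro hk
      rw [Finset.sum_Icc_succ_top (by omega)]
      have := step k hk
      have := ih (by omega)
      linarith
  have hA : ‖S (uH n) - pl n‖ ^ 2 ≤ Δt * Λ :=
    (main n le_rfl).trans (mul_le_mul_of_nonneg_left htail' hΔt.le)
  have hB : ‖d n‖ ^ 2 ≤ Q * Λ := by
    refine (hpoin _).trans (mul_le_mul_of_nonneg_left (le_trans ?_ htail') hQ.le)
    refine le_trans ?_ (Finset.single_le_sum (f := g) (fun i _ => hg0 i)
      (Finset.mem_Icc.2 ⟨hn, le_rfl⟩))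
    simp only [hg]
    have := mul_nonneg (sq_nonneg Q) (hpsd (z n))
    linarith
  have e : uH n - pl n = d n + (S (uH n) - pl n) := by simp only [hd]; abel
  have p := parallelogram_law_with_norm ℝ (d n) (S (uH n) - pl n)
  rw [e]
  have := sq_nonneg ‖d n - (S (uH n) - pl n)‖
  nlinarith
end
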